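/- For every Δt > 0, ∫_M E_{G,U}[δ_Δt(q,G,U)] μ(dq) = 0; that is, the average Metropolized increment has vanishing mean with respect to the Gibbs measure. -/

import Mathlib

/-!
Write `F(q,q') = e^{-V(q)} T(q,q') R(q,q')` for the Metropolized flux. The Metropolis rule gives
`F(q,q') = min (e^{-V(q)} T(q,q')) (e^{-V(q')} T(q',q))`, which is symmetric (detailed balance).
Averaging the increment over `U` and changing variables from `G` to the displacement `h`
(`exists_EguDelta_eq`) turns the Gibbs-weighted mean increment at `q` into `∫ F(q, q+h) h dh`.

Fubini (`integrable_flux`, by a Gaussian bound uniform over the bounded box) rewrites the integral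
over the torus as `∫ Φ(h) h dh` with `Φ(h) = ∫_M F(q, q+h) dq`. Symmetry of `F` together with
translation invariance of integrals of periodic functions over the torus shows that `Φ` is even
(`boxFlux_even`): `Φ(-h) = ∫_M F(q, q-h) dq = ∫_M F(q+h, q) dq = Φ(h)`. Hence `Φ(h) h` is odd and
its integral vanishes.
-/

open MeasureTheory RealInnerProductSpace

noncomputable section

abbrev En (n : ℕ) := EuclideanSpace ℝ (Fin n)

/-- Gaussian proposal density of the Euler–Maruyama scheme. -/
def Tker {n : ℕ} (V : En n → ℝ) (dt : ℝ) (q q' : En n) : ℝ :=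
  (4 * Real.pi * dt) ^ (-(n : ℝ) / 2) *
    Real.exp (-‖q' - q + dt • gradient V q‖ ^ 2 / (4 * dt))

/-- Metropolis acceptance probability. -/
def Rk {n : ℕ} (V : En n → ℝ) (dt : ℝ) (q q' : En n) : ℝ :=
  min 1 (Real.exp (-V q') * Tker V dt q' q / (Real.exp (-V q) * Tker V dt q q'))

/-- proposal move -/
def propMove {n : ℕ} (V : En n → ℝ) (dt : ℝ) (q g : En n) : En n :=
  q - dt • gradient V q + Real.sqrt (2 * dt) • g

def xi {n : ℕ} (V : En n → ℝ) (q g : En n) : ℝ :=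
  -(Real.sqrt 2 / 6) * iteratedFDeriv ℝ 3 V q (fun _ => g) +
    (Real.sqrt 2 / 2) * ⟪gradient V q, fderiv ℝ (gradient V) q g⟫

def xiPlus {n : ℕ} (V : En n → ℝ) (q g : En n) : ℝ := max (xi V q g) 0

/-- standard Gaussian measure on ℝⁿ -/
def gauss (n : ℕ) : Measure (En n) :=
  volume.withDensity fun g =>
    ENNReal.ofReal ((2 * Real.pi) ^ (-(n : ℝ) / 2) * Real.exp (-‖g‖ ^ 2 / 2))

/-- fundamental domain of the torus -/
def Box (n : ℕ) (L : ℝ) : Set (En n) := {q | ∀ i, q i ∈ Set.Ico (0 : ℝ) L}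

/-- integral with respect to the Gibbs measure μ on the torus M -/
def muInt {n : ℕ} (V : En n → ℝ) (L : ℝ) (f : En n → ℝ) : ℝ :=
  (∫ q in Box n L, Real.exp (-V q))⁻¹ * ∫ q in Box n L, f q * Real.exp (-V q)

/-- Laplacian -/
def lap {n : ℕ} (ψ : En n → ℝ) (q : En n) : ℝ :=
  ∑ i, iteratedFDeriv ℝ 2 ψ q (fun _ => EuclideanSpace.single i (1 : ℝ))

/-- generator of the overdamped Langevin dynamics -/
def gen {n : ℕ} (V ψ : En n → ℝ) (q : En n) : ℝ :=
  -⟪gradient V q, gradient ψ q⟫ + lap ψ q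

/-- MALA transition operator on periodic functions -/
def Pmala {n : ℕ} (V : En n → ℝ) (dt : ℝ) (f : En n → ℝ) (q : En n) : ℝ :=
  f q + ∫ q', Rk V dt q q' * Tker V dt q q' * (f q' - f q)

/-- the operator D₁ -/
def D1op {n : ℕ} (V ψ : En n → ℝ) (q : En n) : ℝ :=
  2 * ∑ i, ∑ j, (iteratedFDeriv ℝ 2 V q ![EuclideanSpace.single i (1:ℝ), EuclideanSpace.single j (1:ℝ)]) *
      (iteratedFDeriv ℝ 2 ψ q ![EuclideanSpace.single i (1:ℝ), EuclideanSpace.single j (1:ℝ)])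
    + ⟪gradient (fun x => lap V x) q, gradient ψ q⟫
    - ⟪gradient V q, fderiv ℝ (gradient V) q (gradient ψ q)⟫

/-- the operator D₂ -/
def D2op {n : ℕ} (V ψ : En n → ℝ) (q : En n) : ℝ :=
  -Real.sqrt 2 * ⟪∫ g, xiPlus V q g • g ∂(gauss n), gradient ψ q⟫

/-- the operator A appearing in the expansion of the MALA evolution operator -/
def Aop {n : ℕ} (V ψ : En n → ℝ) (q : En n) : ℝ :=
  (gen V (gen V ψ) q + D1op V ψ q + D2op V ψ q) / 2

/-- Metropolized increment -/
def deltaInc {n : ℕ} (V : En n → ℝ) (dt : ℝ) (q g : En n) (u : ℝ) : En n :=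
  if u ≤ Rk V dt q (propMove V dt q g) then (-dt) • gradient V q + Real.sqrt (2 * dt) • g
  else 0

/-- expectation over G (std Gaussian) and U (uniform on [0,1]) of the increment -/
def EguDelta {n : ℕ} (V : En n → ℝ) (dt : ℝ) (q : En n) : En n :=
  ∫ g, (∫ u in Set.Icc (0 : ℝ) 1, deltaInc V dt q g u) ∂(gauss n)


def muIntV {n : ℕ} (V : En n → ℝ) (L : ℝ) (f : En n → En n) : En n :=
  (∫ q in Box n L, Real.exp (-V q))⁻¹ • ∫ q in Box n L, Real.exp (-V q) • f q

/-! ### The stationary flux -/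

/-- The Metropolized flux `e^{-V(q)} T(q,q') R(q,q')` (unnormalized), written in the form that makes
its symmetry in `(q, q')`, i.e. detailed balance, visible. -/
def flux {n : ℕ} (V : En n → ℝ) (dt : ℝ) (q q' : En n) : ℝ :=
  min (Real.exp (-V q) * Tker V dt q q') (Real.exp (-V q') * Tker V dt q' q)

lemma flux_comm {n : ℕ} (V : En n → ℝ) (dt : ℝ) (q q' : En n) :
    flux V dt q q' = flux V dt q' q := min_comm _ _

lemma Tker_pos {n : ℕ} (V : En n → ℝ) {dt : ℝ} (hdt : 0 < dt) (q q' : En n) :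
    0 < Tker V dt q q' := by
  have := Real.pi_pos
  unfold Tker
  positivity

lemma flux_nonneg {n : ℕ} (V : En n → ℝ) {dt : ℝ} (hdt : 0 < dt) (q q' : En n) :
    0 ≤ flux V dt q q' :=
  le_min (mul_nonneg (Real.exp_pos _).le (Tker_pos V hdt _ _).le)
    (mul_nonneg (Real.exp_pos _).le (Tker_pos V hdt _ _).le)

lemma flux_eq {n : ℕ} (V : En n → ℝ) {dt : ℝ} (hdt : 0 < dt) (q q' : En n) :
    flux V dt q q' = Real.exp (-V q) * Tker V dt q q' * Rk V dt q q' := by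
  have h : 0 < Real.exp (-V q) * Tker V dt q q' := mul_pos (Real.exp_pos _) (Tker_pos V hdt _ _)
  unfold flux Rk
  rw [mul_min_of_nonneg _ _ h.le, mul_one, mul_div_cancel₀ _ h.ne']

lemma Rk_nonneg {n : ℕ} (V : En n → ℝ) {dt : ℝ} (hdt : 0 < dt) (q q' : En n) :
    0 ≤ Rk V dt q q' := by
  have h1 := Tker_pos V hdt q q'
  have h2 := Tker_pos V hdt q' q
  unfold Rk
  positivity

/-! ### Averaging over the uniform and Gaussian variables -/

/-- Averaging the accept/reject indicator over `u` produces the acceptance probability. -/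
lemma integral_deltaInc {n : ℕ} (V : En n → ℝ) {dt : ℝ} (hdt : 0 < dt) (q g : En n) :
    ∫ u in Set.Icc (0 : ℝ) 1, deltaInc V dt q g u =
      Rk V dt q (propMove V dt q g) • ((-dt) • gradient V q + Real.sqrt (2 * dt) • g) := by
  set r := Rk V dt q (propMove V dt q g) with hr
  have h0 : 0 ≤ r := Rk_nonneg V hdt _ _
  have h1 : r ≤ 1 := min_le_left _ _
  have : (fun u => deltaInc V dt q g u) = (Set.Iic r).indicator
      (fun _ => (-dt) • gradient V q + Real.sqrt (2 * dt) • g) := by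
    funext u
    simp only [deltaInc, Set.indicator, Set.mem_Iic, ← hr]
  rw [this, setIntegral_indicator measurableSet_Iic, setIntegral_const]
  congr 1
  have : Set.Icc (0 : ℝ) 1 ∩ Set.Iic r = Set.Icc 0 r := by
    ext x
    simp only [Set.mem_inter_iff, Set.mem_Icc, Set.mem_Iic]
    constructor
    · rintro ⟨⟨a, b⟩, c⟩; exact ⟨a, c⟩
    · rintro ⟨a, c⟩; exact ⟨⟨a, c.trans h1⟩, c⟩
  rw [this]
  simp [h0]

/-- The Gibbs-weighted mean increment is a first moment of the flux. The constant `c` equals one,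
but only its independence of `q` matters. -/
lemma exists_EguDelta_eq {n : ℕ} (V : En n → ℝ) {dt : ℝ} (hdt : 0 < dt) :
    ∃ c : ℝ, ∀ q, Real.exp (-V q) • EguDelta V dt q = c • ∫ h, flux V dt q (q + h) • h := by
  have hpi := Real.pi_pos
  set A : ℝ := (4 * Real.pi * dt) ^ (-(n : ℝ) / 2) with hA
  set B : ℝ := (2 * Real.pi) ^ (-(n : ℝ) / 2) with hB
  have hApos : 0 < A := by positivity
  have hBpos : 0 < B := by positivity
  set s := Real.sqrt (2 * dt) with hs
  have hs2 : s ^ 2 = 2 * dt := Real.sq_sqrt (by positivity)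
  refine ⟨B / A * |(s ^ Module.finrank ℝ (En n))⁻¹|, fun q => ?_⟩
  -- the change of variables `h = -dt ∇V(q) + s g`
  have key : ∀ g : En n, Real.exp (-V q) • ((B * Real.exp (-‖g‖ ^ 2 / 2)) •
      (Rk V dt q (propMove V dt q g) • ((-dt) • gradient V q + s • g))) =
      (B / A) • (fun h => flux V dt q (q + h) • h) ((-dt) • gradient V q + s • g) := by
    intro g
    have e1 : q + ((-dt) • gradient V q + s • g) = propMove V dt q g := by
      simp only [propMove, neg_smul, ← hs]
      abel
    have e2 : Tker V dt q (propMove V dt q g) = A * Real.exp (-‖g‖ ^ 2 / 2) := by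
      have : propMove V dt q g - q + dt • gradient V q = s • g := by
        simp only [propMove, ← hs]
        abel
      simp only [Tker, this, norm_smul, mul_pow, ← hA]
      rw [Real.norm_eq_abs, sq_abs, hs2]
      congr 2
      field_simp
      ring
    simp only [e1, smul_smul]
    congr 1
    rw [flux_eq V hdt, e2]
    field_simp
  unfold EguDelta gauss
  rw [integral_withDensity_eq_integral_toReal_smul (by fun_prop)
    (Filter.Eventually.of_forall fun _ => ENNReal.ofReal_lt_top), ← integral_smul]
  have : ∀ g : En n, Real.exp (-V q) • ((ENNReal.ofReal (B * Real.exp (-‖g‖ ^ 2 / 2))).toReal •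
      ∫ u in Set.Icc (0 : ℝ) 1, deltaInc V dt q g u) =
      (B / A) • (fun h => flux V dt q (q + h) • h) ((-dt) • gradient V q + s • g) := by
    intro g
    rw [integral_deltaInc V hdt, ENNReal.toReal_ofReal (by positivity), key]
  rw [integral_congr_ae (Filter.Eventually.of_forall this), integral_smul,
    Measure.integral_comp_smul volume
      (fun x => (fun h => flux V dt q (q + h) • h) ((-dt) • gradient V q + x)) s,
    integral_add_left_eq_self (fun h => flux V dt q (q + h) • h), smul_smul]

/-! ### Periodicity -/

/-- The basis `L e₁, …, L eₙ` of the period lattice. -/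
def latBasis (n : ℕ) {L : ℝ} (hL : 0 < L) : Module.Basis (Fin n) ℝ (En n) :=
  (EuclideanSpace.basisFun (Fin n) ℝ).toBasis.isUnitSMul (w := fun _ => L)
    (fun _ => isUnit_iff_ne_zero.mpr hL.ne')

lemma latBasis_apply (n : ℕ) {L : ℝ} (hL : 0 < L) (i : Fin n) :
    latBasis n hL i = L • EuclideanSpace.single i (1 : ℝ) := by
  simp [latBasis, Module.Basis.isUnitSMul_apply]

lemma Box_eq (n : ℕ) {L : ℝ} (hL : 0 < L) :
    Box n L = ZSpan.fundamentalDomain (latBasis n hL) := by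
  ext q
  simp only [Box, Set.mem_ofPred_eq, ZSpan.mem_fundamentalDomain]
  refine forall_congr' fun i => ?_
  have : (latBasis n hL).repr q i = L⁻¹ * q i := by
    simp [latBasis, Module.Basis.repr_isUnitSMul, Units.smul_def]
  rw [this, Set.mem_Ico, Set.mem_Ico, inv_mul_eq_div, div_lt_one hL]
  refine and_congr_left fun _ => ?_
  rw [le_div_iff₀ hL, zero_mul]

lemma periodic_lattice {n : ℕ} {L : ℝ} (hL : 0 < L) {V : En n → ℝ}
    (hper : ∀ (q : En n) (i : Fin n), V (q + L • EuclideanSpace.single i (1 : ℝ)) = V q)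
    {v : En n} (hv : v ∈ Submodule.span ℤ (Set.range (latBasis n hL))) :
    ∀ q, V (q + v) = V q := by
  induction hv using Submodule.span_induction with
  | mem x hx =>
    obtain ⟨i, rfl⟩ := hx
    intro q
    rw [latBasis_apply, hper]
  | zero => simp
  | add x y _ _ hx hy => intro q; rw [← add_assoc, hy, hx]
  | smul a x _ hx =>
    have hx' : Function.Periodic V x := hx
    exact hx'.zsmul a

lemma gradient_periodic {n : ℕ} {V : En n → ℝ} {v : En n} (h : ∀ q, V (q + v) = V q) (q : En n) :
    gradient V (q + v) = gradient V q := by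
  have : (fun x => V (x + v)) = V := funext h
  unfold gradient
  rw [← fderiv_comp_add_right, this]

lemma flux_periodic {n : ℕ} {V : En n → ℝ} (dt : ℝ) {v : En n} (h : ∀ q, V (q + v) = V q)
    (q q' : En n) : flux V dt (q + v) (q' + v) = flux V dt q q' := by
  simp only [flux, Tker, gradient_periodic h, h, add_sub_add_right_eq_sub]

open scoped Pointwise in
/-- A lattice-periodic function has the same integral over every translate of the box. -/
lemma setIntegral_Box_add {n : ℕ} {L : ℝ} (hL : 0 < L) (f : En n → ℝ)
    (hf : ∀ v ∈ Submodule.span ℤ (Set.range (latBasis n hL)), ∀ q, f (q + v) = f q) (h : En n) :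
    ∫ q in Box n L, f (q + h) = ∫ q in Box n L, f q := by
  rw [Box_eq n hL]
  set D := ZSpan.fundamentalDomain (latBasis n hL)
  have hD : IsAddFundamentalDomain (Submodule.span ℤ (Set.range (latBasis n hL))).toAddSubgroup D
      (volume : Measure (En n)) := ZSpan.isAddFundamentalDomain' _ _
  have : Countable (Submodule.span ℤ (Set.range (latBasis n hL))).toAddSubgroup :=
    inferInstanceAs (Countable (Submodule.span ℤ (Set.range (latBasis n hL))))
  have hD' := hD.vadd_of_comm h
  rw [hD.setIntegral_eq hD' (f := f) ?_]
  · have e : (fun q : En n => q + h) ⁻¹' (h +ᵥ D) = D := by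
      ext x
      simp [Set.mem_vadd_set_iff_neg_vadd_mem, add_comm x h]
    rw [← (measurePreserving_add_right (volume : Measure (En n)) h).setIntegral_preimage_emb
      (measurableEmbedding_addRight h) f (h +ᵥ D), e]
  · intro g x
    have := hf g.1 g.2 x
    rw [add_comm] at this
    exact this

/-- Detailed balance and periodicity: the flux with displacement `h`, integrated over the torus,
is an even function of `h`. -/
lemma boxFlux_even {n : ℕ} {L : ℝ} (hL : 0 < L) {V : En n → ℝ} (dt : ℝ)
    (hper : ∀ (q : En n) (i : Fin n), V (q + L • EuclideanSpace.single i (1 : ℝ)) = V q)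
    (h : En n) :
    ∫ q in Box n L, flux V dt q (q + -h) = ∫ q in Box n L, flux V dt q (q + h) := by
  rw [← setIntegral_Box_add hL (fun q => flux V dt q (q + -h)) ?_ h]
  · refine integral_congr_ae (Filter.Eventually.of_forall fun q => ?_)
    simp only [add_neg_cancel_right]
    exact flux_comm _ _ _ _
  · intro v hv q
    simp only [add_right_comm q v]
    exact flux_periodic dt (periodic_lattice hL hper hv) _ _

/-! ### Integrability and exchange of integrals -/

lemma continuous_gradient {n : ℕ} {V : En n → ℝ} (hV : ContDiff ℝ (⊤ : ℕ∞) V) :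
    Continuous (gradient V) :=
  (LinearIsometryEquiv.continuous _).comp (hV.continuous_fderiv (by simp))

lemma continuous_flux {n : ℕ} {V : En n → ℝ} (hV : ContDiff ℝ (⊤ : ℕ∞) V) (dt : ℝ) :
    Continuous fun p : En n × En n => flux V dt p.1 (p.1 + p.2) := by
  have h1 := hV.continuous
  have h2 := continuous_gradient hV
  unfold flux Tker
  fun_prop

lemma Box_bounded (n : ℕ) {L : ℝ} (hL : 0 < L) : Bornology.IsBounded (Box n L) := by
  rw [Box_eq n hL]
  exact ZSpan.fundamentalDomain_isBounded _

lemma integrable_gaussian (n : ℕ) {b : ℝ} (hb : 0 < b) :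
    Integrable fun h : En n => Real.exp (-b * ‖h‖ ^ 2) := by
  have := (GaussianFourier.integrable_cexp_neg_mul_sq_norm_add (b := (b : ℂ)) (by simpa using hb) 0
    (0 : En n)).norm
  refine this.congr (Filter.Eventually.of_forall fun h => ?_)
  simp [Complex.norm_exp, ← Complex.ofReal_pow]

/-- Gaussian domination of the flux moment, uniform in `q` over the box, where `∇V` is bounded. -/
lemma flux_bound {n : ℕ} {L : ℝ} (hL : 0 < L) {V : En n → ℝ} (hV : ContDiff ℝ (⊤ : ℕ∞) V)
    {dt : ℝ} (hdt : 0 < dt) :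
    ∃ K b : ℝ, 0 < b ∧ ∀ q ∈ Box n L, ∀ h,
      ‖flux V dt q (q + h) • h‖ ≤ K * Real.exp (-b * ‖h‖ ^ 2) := by
  have hcomp : IsCompact (closure (Box n L)) := (Box_bounded n hL).isCompact_closure
  obtain ⟨B, hB⟩ := hcomp.exists_bound_of_continuousOn (continuous_gradient hV).continuousOn
  obtain ⟨M, hM⟩ := hcomp.exists_bound_of_continuousOn
    (Real.continuous_exp.comp hV.continuous.neg).continuousOn
  have hpi := Real.pi_pos
  set A : ℝ := (4 * Real.pi * dt) ^ (-(n : ℝ) / 2) with hA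
  have hApos : 0 < A := by positivity
  set b : ℝ := 1 / (16 * dt) with hb
  have hbpos : 0 < b := by positivity
  refine ⟨M * (A * Real.exp (dt * B ^ 2 / 4)) * (1 + 1 / b), b, hbpos, fun q hq h => ?_⟩
  have hq' := subset_closure hq
  have hBq := hB q hq'
  have hMq : Real.exp (-V q) ≤ M := by
    have := hM q hq'
    simpa [Real.norm_eq_abs, abs_of_pos (Real.exp_pos _)] using this
  have hT : Tker V dt q (q + h) ≤
      A * Real.exp (dt * B ^ 2 / 4) * Real.exp (-(2 * b) * ‖h‖ ^ 2) := by
    unfold Tker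
    rw [← hA, mul_assoc, ← Real.exp_add]
    refine mul_le_mul_of_nonneg_left (Real.exp_le_exp.mpr ?_) hApos.le
    rw [add_sub_cancel_left]
    set a := dt • gradient V q with ha
    have hna : ‖a‖ ≤ dt * B := by
      rw [ha, norm_smul, Real.norm_eq_abs, abs_of_pos hdt]
      exact mul_le_mul_of_nonneg_left hBq hdt.le
    have h1 : ‖h‖ ≤ ‖h + a‖ + ‖a‖ := by
      calc ‖h‖ = ‖(h + a) - a‖ := by rw [add_sub_cancel_right]
        _ ≤ _ := norm_sub_le _ _
    -- `|h|² ≤ 2|h+a|² + 2|a|²`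
    have h2 : ‖h‖ ^ 2 ≤ 2 * ‖h + a‖ ^ 2 + 2 * (dt * B) ^ 2 := by
      have := norm_nonneg h
      have := norm_nonneg a
      nlinarith [sq_nonneg (‖h + a‖ - ‖a‖), norm_nonneg (h + a)]
    rw [hb, div_le_iff₀ (by positivity)]
    have : (dt * B ^ 2 / 4 + -(2 * (1 / (16 * dt))) * ‖h‖ ^ 2) * (4 * dt) =
        (dt * B) ^ 2 - ‖h‖ ^ 2 / 2 := by
      field_simp
      ring
    rw [this]
    linarith
  have hh : ‖h‖ ≤ (1 + 1 / b) * Real.exp (b * ‖h‖ ^ 2) := by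
    have h1 := Real.add_one_le_exp (b * ‖h‖ ^ 2)
    have h2 : ‖h‖ ≤ (1 + 1 / b) * (b * ‖h‖ ^ 2 + 1) := by
      have : (1 + 1 / b) * (b * ‖h‖ ^ 2 + 1) = b * ‖h‖ ^ 2 + 1 + ‖h‖ ^ 2 + 1 / b := by
        field_simp
        ring
      rw [this]
      have : 0 ≤ b * ‖h‖ ^ 2 := by positivity
      have : 0 < 1 / b := by positivity
      nlinarith [sq_nonneg (‖h‖ - 1 / 2)]
    exact h2.trans (mul_le_mul_of_nonneg_left h1 (by positivity))
  have hM0 : 0 ≤ M := (Real.exp_pos _).le.trans hMq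
  rw [norm_smul, Real.norm_eq_abs, abs_of_nonneg (flux_nonneg V hdt _ _)]
  calc flux V dt q (q + h) * ‖h‖
      ≤ (M * (A * Real.exp (dt * B ^ 2 / 4) * Real.exp (-(2 * b) * ‖h‖ ^ 2))) *
        ((1 + 1 / b) * Real.exp (b * ‖h‖ ^ 2)) := by
        refine mul_le_mul ?_ hh (norm_nonneg _) (by positivity)
        exact (min_le_left _ _).trans (mul_le_mul hMq hT (Tker_pos V hdt _ _).le hM0)
    _ = M * (A * Real.exp (dt * B ^ 2 / 4)) * (1 + 1 / b) *
        (Real.exp (-(2 * b) * ‖h‖ ^ 2) * Real.exp (b * ‖h‖ ^ 2)) := by ring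
    _ = _ := by
        rw [← Real.exp_add]
        congr 2
        ring

lemma integrable_flux {n : ℕ} {L : ℝ} (hL : 0 < L) {V : En n → ℝ} (hV : ContDiff ℝ (⊤ : ℕ∞) V)
    {dt : ℝ} (hdt : 0 < dt) :
    Integrable (Function.uncurry fun q h : En n => flux V dt q (q + h) • h)
      ((volume.restrict (Box n L)).prod volume) := by
  obtain ⟨K, b, hb, hK⟩ := flux_bound hL hV hdt
  have hmeas : MeasurableSet (Box n L) := by
    rw [Box_eq n hL]
    exact ZSpan.fundamentalDomain_measurableSet _
  have : IsFiniteMeasure ((volume : Measure (En n)).restrict (Box n L)) :=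
    ⟨by simpa using (Box_bounded n hL).measure_lt_top⟩
  have hdom : Integrable (fun p : En n × En n => (1 : ℝ) * (K * Real.exp (-b * ‖p.2‖ ^ 2)))
      (((volume : Measure (En n)).restrict (Box n L)).prod volume) :=
    (integrable_const (1 : ℝ)).mul_prod ((integrable_gaussian n hb).const_mul K)
  refine hdom.mono' ?_ ?_
  · exact ((continuous_flux hV dt).smul continuous_snd).aestronglyMeasurable
  · have hae : ∀ᵐ p : En n × En n ∂(((volume : Measure (En n)).restrict (Box n L)).prod volume),
        p.1 ∈ Box n L :=
      Measure.quasiMeasurePreserving_fst.ae (ae_restrict_mem hmeas)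
    filter_upwards [hae] with p hp
    rw [one_mul]
    exact hK p.1 hp p.2

theorem stmt14 (n : ℕ) (hn : 1 ≤ n) (L : ℝ) (hL : 0 < L)
    (V : En n → ℝ) (hV : ContDiff ℝ (⊤ : ℕ∞) V)
    (hper : ∀ (q : En n) (i : Fin n), V (q + L • EuclideanSpace.single i (1 : ℝ)) = V q) :
    ∀ dt : ℝ, 0 < dt → muIntV V L (fun q => EguDelta V dt q) = 0 := by
  intro dt hdt
  obtain ⟨c, hc⟩ := exists_EguDelta_eq V hdt
  unfold muIntV
  simp only [hc]
  rw [integral_smul, integral_integral_swap (integrable_flux hL hV hdt)]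
  simp only [integral_smul_const]
  -- the integrand `Φ(h) h` is odd because `Φ` is even
  have hodd : ∫ h, (∫ q in Box n L, flux V dt q (q + h)) • h =
      -∫ h, (∫ q in Box n L, flux V dt q (q + h)) • h := by
    conv_lhs => rw [← integral_neg_eq_self]
    rw [← integral_neg]
    refine integral_congr_ae (Filter.Eventually.of_forall fun h => ?_)
    simp only [boxFlux_even hL dt hper h, smul_neg]
  have : IsAddTorsionFree (En n) := .of_isTorsionFree ℝ (En n)
  rw [self_eq_neg.mp hodd, smul_zero, smul_zero]
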